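/- For every infinite quaternary digit sequence q : {1,2,…} → {0,1,2,3}, the nested compact sets S_n = (T_{q_1} ∘ T_{q_2} ∘ ⋯ ∘ T_{q_n}) '' Q shrink to a point: there exists exactly one z ∈ ℂ belonging to S_n for every n ≥ 1. (This point is the value H(t) of the Hilbert curve at the parameter t with quaternary digits q.) -/

import Mathlib

/-! Each `T d` is a similarity of ratio `1/2` (orientation reversing for `d = 0, 3`) mapping the
unit square `Q` into itself. Hence the sets `comps q n '' Q` are nonempty, compact and nested, so
Cantor's intersection theorem gives a common point; two common points lie at distance at most
`2 / 2 ^ n` for every `n`, so they coincide. -/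

open Complex

noncomputable section

/-- The four generating transformations of the Hilbert curve on the complex plane:
`T₀ z = (conj z · i)/2`, `T₁ z = z/2 + i/2`, `T₂ z = z/2 + (1+i)/2`,
`T₃ z = −(conj z · i)/2 + (2+i)/2`. -/
def T : Fin 4 → ℂ → ℂ
  | 0 => fun z => (starRingEnd ℂ) z * Complex.I / 2
  | 1 => fun z => z / 2 + Complex.I / 2
  | 2 => fun z => z / 2 + (1 + Complex.I) / 2
  | 3 => fun z => -((starRingEnd ℂ) z * Complex.I) / 2 + (2 + Complex.I) / 2

/-- The closed unit square `Q = [0,1] × [0,1]` in the complex plane. -/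
def Q : Set ℂ := {z : ℂ | z.re ∈ Set.Icc (0 : ℝ) 1 ∧ z.im ∈ Set.Icc (0 : ℝ) 1}

/-- `comps q n = T_{q 1} ∘ T_{q 2} ∘ ⋯ ∘ T_{q n}` (digits indexed from 1). -/
def comps (q : ℕ → Fin 4) : ℕ → ℂ → ℂ
  | 0 => id
  | n + 1 => comps q n ∘ T (q (n + 1))

theorem mapsTo_T (d : Fin 4) : Set.MapsTo (T d) Q Q := by
  rintro z ⟨⟨h1, h2⟩, h3, h4⟩
  fin_cases d <;> refine ⟨⟨?_, ?_⟩, ?_, ?_⟩ <;> simp [T] <;> linarith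

theorem dist_T (d : Fin 4) (z w : ℂ) : dist (T d z) (T d w) = dist z w / 2 := by
  have key : ‖(starRingEnd ℂ) z - (starRingEnd ℂ) w‖ = ‖z - w‖ := by
    rw [← map_sub, Complex.norm_conj]
  simp only [dist_eq_norm]
  fin_cases d <;> simp only [T]
  · rw [show (starRingEnd ℂ) z * Complex.I / 2 - (starRingEnd ℂ) w * Complex.I / 2
      = ((starRingEnd ℂ) z - (starRingEnd ℂ) w) * Complex.I / 2 by ring]
    simp [key]
  · rw [show z / 2 + Complex.I / 2 - (w / 2 + Complex.I / 2) = (z - w) / 2 by ring]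
    simp
  · rw [show z / 2 + (1 + Complex.I) / 2 - (w / 2 + (1 + Complex.I) / 2) = (z - w) / 2 by ring]
    simp
  · rw [show -((starRingEnd ℂ) z * Complex.I) / 2 + (2 + Complex.I) / 2
        - (-((starRingEnd ℂ) w * Complex.I) / 2 + (2 + Complex.I) / 2)
      = -(((starRingEnd ℂ) z - (starRingEnd ℂ) w) * Complex.I / 2) by ring]
    simp [key]

theorem continuous_T (d : Fin 4) : Continuous (T d) := by
  fin_cases d <;> simp only [T] <;> fun_prop

theorem dist_comps (q : ℕ → Fin 4) (n : ℕ) (z w : ℂ) :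
    dist (comps q n z) (comps q n w) = dist z w / 2 ^ n := by
  induction n generalizing z w with
  | zero => simp [comps]
  | succ n ih =>
    simp only [comps, Function.comp_apply, ih, dist_T]
    rw [div_div, pow_succ']

theorem continuous_comps (q : ℕ → Fin 4) (n : ℕ) : Continuous (comps q n) := by
  induction n with
  | zero => exact continuous_id
  | succ n ih => exact ih.comp (continuous_T _)

theorem isCompact_Q : IsCompact Q :=
  isCompact_Icc.reProdIm isCompact_Icc

theorem dist_le_two_of_mem_Q {z w : ℂ} (hz : z ∈ Q) (hw : w ∈ Q) : dist z w ≤ 2 := by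
  obtain ⟨⟨h1, h2⟩, h3, h4⟩ := hz
  obtain ⟨⟨k1, k2⟩, k3, k4⟩ := hw
  have hre : |(z - w).re| ≤ 1 := by rw [Complex.sub_re, abs_le]; constructor <;> linarith
  have him : |(z - w).im| ≤ 1 := by rw [Complex.sub_im, abs_le]; constructor <;> linarith
  rw [dist_eq_norm]
  linarith [Complex.norm_le_abs_re_add_abs_im (z - w)]

/-- For every infinite quaternary digit sequence, the nested compact sets
`S_n = (T_{q_1} ∘ ⋯ ∘ T_{q_n}) '' Q` shrink to a single point. -/
theorem hilbert_nested_squares_unique_point (q : ℕ → Fin 4) :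
    ∃! z : ℂ, ∀ n : ℕ, 1 ≤ n → z ∈ comps q n '' Q := by
  have hcomp (n : ℕ) : IsCompact (comps q n '' Q) := isCompact_Q.image (continuous_comps q n)
  obtain ⟨z, hz⟩ := IsCompact.nonempty_iInter_of_sequence_nonempty_isCompact_isClosed
    (fun n => comps q n '' Q)
    (fun n => by
      rintro _ ⟨x, hx, rfl⟩
      exact ⟨T (q (n + 1)) x, mapsTo_T _ hx, rfl⟩)
    (fun n => Set.Nonempty.image _ ⟨0, by simp [Q]⟩)
    (hcomp 0) (fun n => (hcomp n).isClosed)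
  rw [Set.mem_iInter] at hz
  refine ⟨z, fun n _ => hz n, fun w hw => ?_⟩
  have hle (n : ℕ) (hn : 1 ≤ n) : dist w z ≤ 2 / 2 ^ n := by
    obtain ⟨a, ha, rfl⟩ := hw n hn
    obtain ⟨b, hb, hbz⟩ := hz n
    rw [← hbz, dist_comps]
    gcongr
    exact dist_le_two_of_mem_Q ha hb
  have hlim : Filter.Tendsto (fun n : ℕ => (2 : ℝ) / 2 ^ n) Filter.atTop (nhds 0) :=
    tendsto_const_nhds.div_atTop (tendsto_pow_atTop_atTop_of_one_lt one_lt_two)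
  refine dist_le_zero.mp (ge_of_tendsto hlim ?_)
  filter_upwards [Filter.eventually_ge_atTop 1] with n hn using hle n hn

end
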